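/- arXiv:1910.04401 — 2 statements merged into one kernel-verified Lean document; each statement's English description precedes it below -/
import Mathlib

section
/- Let μ0 and μ' be stable matchings such that μ' covers μ0 in the woman-dominance order. Then there exists a list of pairs [(w_0,m_0), (w_1,m_1), …, (w_{k-1},m_{k-1})] with k ≥ 2, all women w_i distinct and all men m_i distinct, such that μ0(w_i) = m_i for each i, μ'(m_i) = w_{i+1 mod k} for each i, and every agent not appearing in the list has the same partner in μ0 and μ'; i.e., μ' is the elimination of a rotation exposed in μ0. -/
/-- A matching market: men `M` and women `W`; each man has a strict preference
order over `W ∪ {∅}` and each woman over `M ∪ {∅}`, encoded by injective rank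
functions (a strictly higher rank means strictly more preferred); `none`
plays the role of `∅` (being unmatched), and partners ranked below `none`
are unacceptable. -/
structure Market (M W : Type*) where
  mRank : M → Option W → ℕ
  wRank : W → Option M → ℕ
  mRank_inj : ∀ m, Function.Injective (mRank m)
  wRank_inj : ∀ w, Function.Injective (wRank w)

/-- A matching: `mu` assigns each man a woman or `none`, `nu` assigns each
woman a man or `none`, and `μ(m) = w ↔ μ(w) = m`. -/
structure Matching (M W : Type*) where
  mu : M → Option W
  nu : W → Option M
  consistent : ∀ m w, mu m = some w ↔ nu w = some m

variable {M W : Type*}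

/-- Every matched agent prefers their partner to `∅`. -/
def Market.IndivRational (mkt : Market M W) (μ : Matching M W) : Prop :=
  (∀ m w, μ.mu m = some w → mkt.mRank m none < mkt.mRank m (some w)) ∧
  (∀ w m, μ.nu w = some m → mkt.wRank w none < mkt.wRank w (some m))

/-- `(m, w)` is a blocking pair for `μ`: they are not matched to each other,
`w ≻_m μ(m)` and `m ≻_w μ(w)`. -/
def Market.Blocking (mkt : Market M W) (μ : Matching M W) (m : M) (w : W) : Prop :=
  μ.mu m ≠ some w ∧
  mkt.mRank m (μ.mu m) < mkt.mRank m (some w) ∧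
  mkt.wRank w (μ.nu w) < mkt.wRank w (some m)

/-- A matching is stable if it is individually rational and has no blocking pair. -/
def Market.Stable (mkt : Market M W) (μ : Matching M W) : Prop :=
  mkt.IndivRational μ ∧ ∀ m w, ¬ mkt.Blocking μ m w

/-- Woman-dominance: `μ ≥ μ'` iff every woman weakly prefers her partner in `μ`. -/
def Market.Dom (mkt : Market M W) (μ μ' : Matching M W) : Prop :=
  ∀ w, mkt.wRank w (μ'.nu w) ≤ mkt.wRank w (μ.nu w)

/-- Strict woman-dominance: `μ > μ'`. -/
def Market.StrictDom (mkt : Market M W) (μ μ' : Matching M W) : Prop :=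
  mkt.Dom μ μ' ∧ μ ≠ μ'

/-- `μ'` covers `μ` in the woman-dominance order on stable matchings. -/
def Market.Covers (mkt : Market M W) (μ' μ : Matching M W) : Prop :=
  mkt.StrictDom μ' μ ∧
  ¬ ∃ μ'' : Matching M W, mkt.Stable μ'' ∧ mkt.StrictDom μ' μ'' ∧ mkt.StrictDom μ'' μ

/-- `μ'` is the elimination of the list `ρ = [(w_0,m_0),…,(w_{k-1},m_{k-1})]`
from `μ`: `k ≥ 2`, the women (resp. men) in `ρ` are distinct, `μ(w_i) = m_i`,
`μ'(m_i) = w_{(i+1) mod k}`, and every agent not appearing in `ρ` has the same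
partner in `μ` and `μ'`. -/
def Matching.IsElimOf (μ' μ : Matching M W) (ρ : List (W × M)) : Prop :=
  2 ≤ ρ.length ∧
  (ρ.map Prod.fst).Nodup ∧ (ρ.map Prod.snd).Nodup ∧
  (∀ i : Fin ρ.length, μ.nu (ρ.get i).1 = some (ρ.get i).2) ∧
  (∀ i : Fin ρ.length, μ'.mu (ρ.get i).2 =
    some (ρ.get ⟨(i.1 + 1) % ρ.length,
      Nat.mod_lt _ (Nat.lt_of_le_of_lt (Nat.zero_le _) i.isLt)⟩).1) ∧
  (∀ m : M, m ∉ ρ.map Prod.snd → μ'.mu m = μ.mu m) ∧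
  (∀ w : W, w ∉ ρ.map Prod.fst → μ'.nu w = μ.nu w)

/-- `ρ` is a rotation exposed in `μ`: the elimination of `ρ` from `μ` is a
stable matching which covers `μ`. -/
def Market.ExposedRotation (mkt : Market M W) (μ : Matching M W) (ρ : List (W × M)) : Prop :=
  ∃ μ' : Matching M W, Matching.IsElimOf μ' μ ρ ∧ mkt.Stable μ' ∧ mkt.Covers μ' μ

/-- `ρ` belongs to the set `Π` of all rotations, i.e. it is exposed in some
stable matching. -/
def Market.InPi (mkt : Market M W) (ρ : List (W × M)) : Prop :=
  ∃ μ : Matching M W, mkt.Stable μ ∧ mkt.ExposedRotation μ ρ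

/-- The cyclically next index in a rotation. -/
def RotNext (ρ : List (W × M)) (i : Fin ρ.length) : Fin ρ.length :=
  ⟨(i.1 + 1) % ρ.length, Nat.mod_lt _ (Nat.lt_of_le_of_lt (Nat.zero_le _) i.isLt)⟩

/-- The cyclically previous index in a rotation. -/
def RotPrev (ρ : List (W × M)) (i : Fin ρ.length) : Fin ρ.length :=
  ⟨(i.1 + ρ.length - 1) % ρ.length, Nat.mod_lt _ (Nat.lt_of_le_of_lt (Nat.zero_le _) i.isLt)⟩

/-- `ρ` moves man `m` from `w` to `w'` (i.e. `m = m_i`, `w = w_i`, `w' = w_{i+1}`). -/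
def MovesManFromTo (ρ : List (W × M)) (m : M) (w w' : W) : Prop :=
  ∃ i : Fin ρ.length, (ρ.get i).2 = m ∧ (ρ.get i).1 = w ∧ (ρ.get (RotNext ρ i)).1 = w'

/-- `ρ` moves woman `w` from `m` to `m'` (i.e. `w = w_i`, `m = m_i`, `m' = m_{i-1}`). -/
def MovesWomanFromTo (ρ : List (W × M)) (w : W) (m m' : M) : Prop :=
  ∃ i : Fin ρ.length, (ρ.get i).1 = w ∧ (ρ.get i).2 = m ∧ (ρ.get (RotPrev ρ i)).2 = m'

/-- `ρ1` is a type 1 predecessor of `ρ2`: `ρ1` moves some man `m` to a woman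
`w` and the pair `(w, m)` appears in `ρ2`. -/
def Market.Type1Pred (_mkt : Market M W) (ρ1 ρ2 : List (W × M)) : Prop :=
  ∃ (w : W) (m : M), (∃ w0 : W, MovesManFromTo ρ1 m w0 w) ∧ (w, m) ∈ ρ2

/-- `ρ1` is a type 2 predecessor of `ρ2`: `ρ1` moves some woman `w` from a man
strictly below `m` to a man strictly above `m`, and `ρ2` moves `m` from a woman
strictly above `w` to a woman strictly below `w`. -/
def Market.Type2Pred (mkt : Market M W) (ρ1 ρ2 : List (W × M)) : Prop :=
  ∃ (m : M) (w : W) (mlo mhi : M) (whi wlo : W),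
    MovesWomanFromTo ρ1 w mlo mhi ∧
    mkt.wRank w (some mlo) < mkt.wRank w (some m) ∧
    mkt.wRank w (some m) < mkt.wRank w (some mhi) ∧
    MovesManFromTo ρ2 m whi wlo ∧
    mkt.mRank m (some wlo) < mkt.mRank m (some w) ∧
    mkt.mRank m (some w) < mkt.mRank m (some whi)

/-- `ρ1` is a (type 1 or type 2) predecessor of `ρ2`; these are the edges of
the predecessor graph `G(Π)`. -/
def Market.Pred (mkt : Market M W) (ρ1 ρ2 : List (W × M)) : Prop :=
  mkt.Type1Pred ρ1 ρ2 ∨ mkt.Type2Pred ρ1 ρ2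

/-- `σ` assigns each woman the more preferred of her partners in `μ` and `μ'`. -/
def Market.IsJoin (mkt : Market M W) (μ μ' σ : Matching M W) : Prop :=
  ∀ w, σ.nu w = if mkt.wRank w (μ'.nu w) ≤ mkt.wRank w (μ.nu w) then μ.nu w else μ'.nu w

/-- `σ` assigns each woman the less preferred of her partners in `μ` and `μ'`. -/
def Market.IsMeet (mkt : Market M W) (μ μ' σ : Matching M W) : Prop :=
  ∀ w, σ.nu w = if mkt.wRank w (μ.nu w) ≤ mkt.wRank w (μ'.nu w) then μ.nu w else μ'.nu w

/-!
Call a man moved if his partner changes between `μ` and `μ'`. Every woman whom a moved man leaves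
gets another moved man, so by counting the moved men hold the same women in `μ` and in `μ'`, and
each of them falls to a less preferred partner. Let a moved man `m` point at `μ(w)`, where `w` is
his favourite among the acceptable women below `μ(m)` who prefer him to their partner in `μ`. As
`μ'` is stable, `w` has improved in `μ'`, so the man pointed at is moved too, and following the
pointers yields a cycle. Letting each man of this cycle replace the man he points at gives a
stable matching strictly above `μ` and weakly below `μ'`, which is `μ'` because `μ'` covers `μ`.
-/

section Cycles

variable {α : Type*}

theorem nodup_iterate_minimalPeriod (f : α → α) (x : α) :
    (List.iterate f x (Function.minimalPeriod f x)).Nodup := by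
  rw [← List.range_map_iterate]
  refine List.nodup_range.map_on fun i hi j hj h => ?_
  exact Function.iterate_injOn_Iio_minimalPeriod (List.mem_range.1 hi) (List.mem_range.1 hj) h

theorem exists_mem_periodicPts_of_mapsTo {s : Set α} (hs : s.Finite)
    (hne : s.Nonempty) {f : α → α} (hf : Set.MapsTo f s s) :
    ∃ x ∈ s, x ∈ Function.periodicPts f := by
  obtain ⟨a, ha⟩ := hne
  obtain ⟨i, j, hij, heq⟩ := hs.exists_lt_map_eq_of_forall_mem fun n => hf.iterate n ha
  refine ⟨f^[i] a, hf.iterate i ha,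
    Function.mk_mem_periodicPts (n := j - i) (Nat.sub_pos_of_lt hij) ?_⟩
  rw [Function.IsPeriodicPt, Function.IsFixedPt, ← Function.iterate_add_apply,
    Nat.sub_add_cancel hij.le, heq]

theorem formPerm_iterate_minimalPeriod_apply [DecidableEq α] {f : α → α} {x : α} :
    ∀ y ∈ List.iterate f x (Function.minimalPeriod f x),
      (List.iterate f x (Function.minimalPeriod f x)).formPerm y = f y := by
  intro y hy
  obtain ⟨i, hi, rfl⟩ := List.getElem_of_mem hy
  rw [List.formPerm_apply_getElem _ (nodup_iterate_minimalPeriod f x)]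
  simp only [List.getElem_iterate, List.length_iterate, Function.iterate_mod_minimalPeriod_eq,
    Function.iterate_succ_apply']

theorem exists_nodup_formPerm_of_finite [DecidableEq α] {s : Set α} (hs : s.Finite)
    (hne : s.Nonempty) {r : α → α → Prop} (hr : ∀ a ∈ s, ∃ b ∈ s, r a b) :
    ∃ l : List α, l ≠ [] ∧ l.Nodup ∧ ∀ a ∈ l, a ∈ s ∧ r a (l.formPerm a) := by
  obtain ⟨a₀, ha₀⟩ := hne
  have : Nonempty α := ⟨a₀⟩
  choose! f hfs hrf using hr
  have hf : Set.MapsTo f s s := hfs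
  obtain ⟨x, hx, hper⟩ := exists_mem_periodicPts_of_mapsTo hs ⟨a₀, ha₀⟩ hf
  refine ⟨List.iterate f x (Function.minimalPeriod f x), ?_, nodup_iterate_minimalPeriod f x,
    fun a ha => ?_⟩
  · simpa only [ne_eq, List.iterate_eq_nil] using
      (Function.minimalPeriod_pos_of_mem_periodicPts hper).ne'
  · have has : a ∈ s := by
      obtain ⟨i, -, rfl⟩ := List.mem_iterate.1 ha
      exact hf.iterate i hx
    exact ⟨has, formPerm_iterate_minimalPeriod_apply a ha ▸ hrf a has⟩

end Cycles

namespace Matching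

variable {μ μ' : Matching M W} {m m' : M} {w : W}

theorem eq_of_mu_eq (h : μ.mu = μ'.mu) : μ = μ' := by
  have hnu : μ.nu = μ'.nu := by
    ext w m
    rw [← μ.consistent, ← μ'.consistent, h]
  cases μ
  cases μ'
  congr

theorem eq_of_mu_eq_some (h : μ.mu m = some w) (h' : μ.mu m' = some w) : m = m' :=
  Option.some.inj (((μ.consistent m w).1 h).symm.trans ((μ.consistent m' w).1 h'))

/-- The men whose partner in `μ'` differs from the one in `μ`. When `μ'` covers `μ`, they turn out
to be the men of the rotation leading from `μ` to `μ'`. -/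
def moved (μ μ' : Matching M W) : Set M := {m | μ'.mu m ≠ μ.mu m}

theorem nonempty_moved (h : μ' ≠ μ) : (moved μ μ').Nonempty := by
  by_contra hempty
  have heq (m : M) : μ'.mu m = μ.mu m :=
    not_not.1 fun hm => hempty ⟨m, hm⟩
  exact h (eq_of_mu_eq (funext heq))

/-- The matching obtained from `μ` by giving each man `m` the `μ`-partner of `σ m`. Eliminating a
rotation is the case of a cyclic permutation `σ`; a permutation of all men, with the others as
fixed points, makes consistency automatic. -/
def permute (μ : Matching M W) (σ : Equiv.Perm M) : Matching M W where
  mu m := μ.mu (σ m)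
  nu w := (μ.nu w).map σ.symm
  consistent m w := by
    simp only [μ.consistent, Option.map_eq_some_iff, Equiv.symm_apply_eq, exists_eq_right]

theorem permute_nu_eq_or (μ : Matching M W) (σ : Equiv.Perm M) (w : W) :
    (μ.permute σ).nu w = μ.nu w ∨
      ∃ m, σ m ≠ m ∧ μ.mu (σ m) = some w ∧ (μ.permute σ).nu w = some m := by
  cases hw : (μ.permute σ).nu w with
  | none => exact .inl (Option.map_eq_none_iff.1 hw).symm
  | some m =>
    have hm : μ.mu (σ m) = some w := ((μ.permute σ).consistent m w).2 hw
    by_cases hfix : σ m = m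
    · exact .inl ((μ.consistent m w).1 (hfix ▸ hm)).symm
    · exact .inr ⟨m, hfix, hm, rfl⟩

theorem isElimOf_permute_formPerm [DecidableEq M] {l : List M} (hl : l.Nodup)
    (hlen : 2 ≤ l.length) {t : M → W} (ht : ∀ m ∈ l, μ.mu m = some (t m)) :
    IsElimOf (μ.permute l.formPerm) μ (l.map fun m => (t m, m)) := by
  have hfst : (l.map fun m => (t m, m)).map Prod.fst = l.map t := by
    simp only [List.map_map, Function.comp_def]
  have hsnd : (l.map fun m => (t m, m)).map Prod.snd = l := by
    simp only [List.map_map, Function.comp_def, List.map_id']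
  have ht_inj : ∀ m ∈ l, ∀ m' ∈ l, t m = t m' → m = m' := fun m hm m' hm' h =>
    eq_of_mu_eq_some (ht m hm) (h ▸ ht m' hm')
  refine ⟨?_, hfst ▸ hl.map_on ht_inj, hsnd.symm ▸ hl, fun i => ?_, fun i => ?_, fun m hm => ?_,
    fun w hw => ?_⟩
  · rwa [List.length_map]
  · simp only [List.get_eq_getElem, List.getElem_map]
    exact (μ.consistent _ _).1 (ht _ (List.getElem_mem _))
  · simp only [List.get_eq_getElem, List.getElem_map, List.length_map, permute]
    rw [List.formPerm_apply_getElem l hl, ht _ (List.getElem_mem _)]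
  · exact congrArg μ.mu (List.formPerm_apply_of_notMem (hsnd ▸ hm))
  · rcases permute_nu_eq_or μ l.formPerm w with heq | ⟨m, hm, hmw, -⟩
    · exact heq
    · have hml := List.formPerm_apply_mem_of_mem (List.mem_of_formPerm_apply_ne hm)
      have htw : t (l.formPerm m) = w := Option.some.inj ((ht _ hml).symm.trans hmw)
      exact absurd (hfst ▸ List.mem_map.2 ⟨_, hml, htw⟩) hw

end Matching

namespace Market

open Matching

variable {mkt : Market M W} {μ μ' : Matching M W} {m m' : M} {w : W}

theorem indivRational_iff : mkt.IndivRational μ ↔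
    (∀ m, mkt.mRank m none ≤ mkt.mRank m (μ.mu m)) ∧
      ∀ w, mkt.wRank w none ≤ mkt.wRank w (μ.nu w) := by
  refine and_congr (forall_congr' fun m => ?_) (forall_congr' fun w => ?_)
  · cases μ.mu m with
    | none => simp
    | some w => simp [((mkt.mRank_inj m).ne (Option.some_ne_none w).symm).le_iff_lt]
  · cases μ.nu w with
    | none => simp
    | some m => simp [((mkt.wRank_inj w).ne (Option.some_ne_none m).symm).le_iff_lt]

theorem Stable.mRank_none_le (h : mkt.Stable μ) (m : M) :
    mkt.mRank m none ≤ mkt.mRank m (μ.mu m) :=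
  (indivRational_iff.1 h.1).1 m

theorem Stable.wRank_none_le (h : mkt.Stable μ) (w : W) :
    mkt.wRank w none ≤ mkt.wRank w (μ.nu w) :=
  (indivRational_iff.1 h.1).2 w

theorem Stable.wRank_le_of_mRank_le (h : mkt.Stable μ)
    (hm : mkt.mRank m (μ.mu m) ≤ mkt.mRank m (some w)) :
    mkt.wRank w (some m) ≤ mkt.wRank w (μ.nu w) := by
  by_cases hmw : μ.mu m = some w
  · rw [(μ.consistent m w).1 hmw]
  · have hlt := hm.lt_of_ne ((mkt.mRank_inj m).ne hmw)
    exact not_lt.1 fun hw => h.2 m w ⟨hmw, hlt, hw⟩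

theorem Dom.mRank_le (hdom : mkt.Dom μ' μ) (h : mkt.Stable μ) (m : M) :
    mkt.mRank m (μ'.mu m) ≤ mkt.mRank m (μ.mu m) := by
  cases hm : μ'.mu m with
  | none => exact h.mRank_none_le m
  | some w =>
    by_contra! hlt
    have hw : mkt.wRank w (μ.nu w) = mkt.wRank w (some m) :=
      le_antisymm ((μ'.consistent m w).1 hm ▸ hdom w) (h.wRank_le_of_mRank_le hlt.le)
    have hmw : μ.mu m = some w := (μ.consistent m w).2 (mkt.wRank_inj w hw)
    exact hlt.ne (congrArg (mkt.mRank m) hmw)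

theorem Dom.mRank_lt_of_mem_moved (hdom : mkt.Dom μ' μ) (h : mkt.Stable μ)
    (hm : m ∈ moved μ μ') : mkt.mRank m (μ'.mu m) < mkt.mRank m (μ.mu m) :=
  (hdom.mRank_le h m).lt_of_ne ((mkt.mRank_inj m).ne hm)

theorem Dom.wRank_lt_of_mem_moved (hdom : mkt.Dom μ' μ) (hm : m ∈ moved μ μ')
    (hw : μ.mu m = some w ∨ μ'.mu m = some w) :
    mkt.wRank w (μ.nu w) < mkt.wRank w (μ'.nu w) := by
  refine (hdom w).lt_of_ne fun heq => hm ?_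
  have hnu : μ.nu w = μ'.nu w := mkt.wRank_inj w heq
  have hiff : μ.mu m = some w ↔ μ'.mu m = some w := by
    rw [μ.consistent, μ'.consistent, hnu]
  rcases hw with hw | hw
  · rw [hw, hiff.1 hw]
  · rw [hw, hiff.2 hw]

theorem Dom.exists_mu_eq_some_of_mem_moved (hdom : mkt.Dom μ' μ) (h : mkt.Stable μ)
    (h' : mkt.Stable μ') (hm : m ∈ moved μ μ') : ∃ w, μ.mu m = some w := by
  refine Option.ne_none_iff_exists'.1 fun hnone => ?_
  have hlt := hdom.mRank_lt_of_mem_moved h hm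
  rw [hnone] at hlt
  exact hlt.not_ge (h'.mRank_none_le m)

theorem Stable.mem_image_moved_of_wRank_lt (h : mkt.Stable μ)
    (hw : mkt.wRank w (μ.nu w) < mkt.wRank w (μ'.nu w)) : some w ∈ μ'.mu '' moved μ μ' := by
  cases hn : μ'.nu w with
  | none => exact absurd (h.wRank_none_le w) (not_le.2 (hn ▸ hw))
  | some n =>
    have hnw : μ'.mu n = some w := (μ'.consistent n w).2 hn
    refine ⟨n, fun heq => hw.ne ?_, hnw⟩
    rw [hn, (μ.consistent n w).1 (heq ▸ hnw)]

theorem Dom.image_moved_eq (hdom : mkt.Dom μ' μ) (h : mkt.Stable μ) (h' : mkt.Stable μ')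
    (hfin : (moved μ μ').Finite) : μ'.mu '' moved μ μ' = μ.mu '' moved μ μ' := by
  have hsub : μ.mu '' moved μ μ' ⊆ μ'.mu '' moved μ μ' := by
    rintro _ ⟨m, hm, rfl⟩
    obtain ⟨w, hw⟩ := hdom.exists_mu_eq_some_of_mem_moved h h' hm
    rw [hw]
    exact h.mem_image_moved_of_wRank_lt (hdom.wRank_lt_of_mem_moved hm (.inl hw))
  have hinj : Set.InjOn μ.mu (moved μ μ') := fun m hm m' _ heq => by
    obtain ⟨w, hw⟩ := hdom.exists_mu_eq_some_of_mem_moved h h' hm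
    exact eq_of_mu_eq_some hw (heq ▸ hw)
  refine (Set.eq_of_subset_of_ncard_le hsub ?_ (hfin.image _)).symm
  rw [hinj.ncard_image]
  exact Set.ncard_image_le hfin

/-- The acceptable women below `m`'s partner in `μ` who prefer `m` to their own partner in `μ`.
These are the women to whom `m` can move down in a rotation. -/
def candidates (mkt : Market M W) (μ : Matching M W) (m : M) : Set W :=
  {w | mkt.mRank m none < mkt.mRank m (some w) ∧
    mkt.mRank m (some w) < mkt.mRank m (μ.mu m) ∧
    mkt.wRank w (μ.nu w) < mkt.wRank w (some m)}

/-- `w` is the favourite candidate of `m`, the woman to whom a rotation containing `m` moves him. -/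
def IsNextWoman (mkt : Market M W) (μ : Matching M W) (m : M) (w : W) : Prop :=
  w ∈ mkt.candidates μ m ∧
    ∀ v ∈ mkt.candidates μ m, mkt.mRank m (some v) ≤ mkt.mRank m (some w)

/-- `m'` is the partner in `μ` of the next woman of `m`: the man displaced when `m` moves to her,
and so the successor of `m` in a rotation. -/
def IsNextMan (mkt : Market M W) (μ : Matching M W) (m m' : M) : Prop :=
  ∃ w, mkt.IsNextWoman μ m w ∧ μ.mu m' = some w

theorem finite_candidates (mkt : Market M W) (μ : Matching M W) (m : M) :
    (mkt.candidates μ m).Finite := by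
  have hinj : Function.Injective fun w => mkt.mRank m (some w) :=
    (mkt.mRank_inj m).comp (Option.some_injective W)
  exact ((Set.finite_lt_nat (mkt.mRank m (μ.mu m))).preimage hinj.injOn).subset
    fun w hw => hw.2.1

theorem exists_isNextWoman (h : (mkt.candidates μ m).Nonempty) : ∃ w, mkt.IsNextWoman μ m w :=
  Set.exists_max_image _ (fun w => mkt.mRank m (some w)) (mkt.finite_candidates μ m) h

theorem IsNextMan.ne (h : mkt.IsNextMan μ m m') : m' ≠ m := by
  rintro rfl
  obtain ⟨w, hw, hmw⟩ := h
  exact hw.1.2.1.ne (congrArg (mkt.mRank m') hmw.symm)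

theorem Dom.mem_candidates_of_mem_moved (hdom : mkt.Dom μ' μ) (h : mkt.Stable μ)
    (h' : mkt.Stable μ') (hm : m ∈ moved μ μ') (hw : μ'.mu m = some w) :
    w ∈ mkt.candidates μ m :=
  ⟨h'.1.1 m w hw, hw ▸ hdom.mRank_lt_of_mem_moved h hm,
    (μ'.consistent m w).1 hw ▸ hdom.wRank_lt_of_mem_moved hm (.inr hw)⟩

theorem Dom.nonempty_candidates (hdom : mkt.Dom μ' μ) (h : mkt.Stable μ)
    (h' : mkt.Stable μ') (hfin : (moved μ μ').Finite) (hm : m ∈ moved μ μ') :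
    (mkt.candidates μ m).Nonempty := by
  obtain ⟨n, hn, hnm⟩ := hdom.image_moved_eq h h' hfin ▸ Set.mem_image_of_mem μ'.mu hm
  obtain ⟨w, hw⟩ := hdom.exists_mu_eq_some_of_mem_moved h h' hn
  exact ⟨w, hdom.mem_candidates_of_mem_moved h h' hm (hnm.symm.trans hw)⟩

theorem IsNextWoman.mRank_le (hw : mkt.IsNextWoman μ m w) (hdom : mkt.Dom μ' μ)
    (h : mkt.Stable μ) (h' : mkt.Stable μ') (hm : m ∈ moved μ μ') :
    mkt.mRank m (μ'.mu m) ≤ mkt.mRank m (some w) := by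
  cases hv : μ'.mu m with
  | none => exact hw.1.1.le
  | some v => exact hw.2 v (hdom.mem_candidates_of_mem_moved h h' hm hv)

theorem IsNextWoman.wRank_le (hw : mkt.IsNextWoman μ m w) (hdom : mkt.Dom μ' μ)
    (h : mkt.Stable μ) (h' : mkt.Stable μ') (hm : m ∈ moved μ μ') :
    mkt.wRank w (some m) ≤ mkt.wRank w (μ'.nu w) :=
  h'.wRank_le_of_mRank_le (hw.mRank_le hdom h h' hm)

theorem Dom.exists_isNextMan (hdom : mkt.Dom μ' μ) (h : mkt.Stable μ) (h' : mkt.Stable μ')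
    (hfin : (moved μ μ').Finite) (hm : m ∈ moved μ μ') :
    ∃ m' ∈ moved μ μ', mkt.IsNextMan μ m m' := by
  obtain ⟨w, hw⟩ := exists_isNextWoman (hdom.nonempty_candidates h h' hfin hm)
  have hlt : mkt.wRank w (μ.nu w) < mkt.wRank w (μ'.nu w) :=
    hw.1.2.2.trans_le (hw.wRank_le hdom h h' hm)
  obtain ⟨m', hm', hm'w⟩ := hdom.image_moved_eq h h' hfin ▸ h.mem_image_moved_of_wRank_lt hlt
  exact ⟨m', hm', w, hw, hm'w⟩

section Permute

variable {σ : Equiv.Perm M}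

theorem dom_permute (hσ : ∀ m, σ m ≠ m → mkt.IsNextMan μ m (σ m)) :
    mkt.Dom (μ.permute σ) μ := by
  intro w
  rcases permute_nu_eq_or μ σ w with heq | ⟨m, hm, hmw, hnu⟩
  · exact heq ▸ le_rfl
  · obtain ⟨v, hv, hmv⟩ := hσ m hm
    obtain rfl : v = w := Option.some.inj (hmv.symm.trans hmw)
    exact hnu ▸ hv.1.2.2.le

theorem permute_ne_of_isNextMan (hm : mkt.IsNextMan μ m (σ m)) : μ.permute σ ≠ μ := by
  obtain ⟨w, hw, hmw⟩ := hm
  intro heq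
  have hmu : μ.mu m = some w := (congrArg (fun ν => ν.mu m) heq).symm.trans hmw
  exact hw.1.2.1.ne (congrArg (mkt.mRank m) hmu.symm)

theorem Dom.dom_permute_of_mem_moved (hdom : mkt.Dom μ' μ) (h : mkt.Stable μ)
    (h' : mkt.Stable μ')
    (hσ : ∀ m, σ m ≠ m → m ∈ moved μ μ' ∧ mkt.IsNextMan μ m (σ m)) :
    mkt.Dom μ' (μ.permute σ) := by
  intro w
  rcases permute_nu_eq_or μ σ w with heq | ⟨m, hm, hmw, hnu⟩
  · exact heq ▸ hdom w
  · obtain ⟨hmoved, v, hv, hmv⟩ := hσ m hm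
    obtain rfl : v = w := Option.some.inj (hmv.symm.trans hmw)
    exact hnu ▸ hv.wRank_le hdom h h' hmoved

theorem Stable.mRank_none_le_permute (h : mkt.Stable μ)
    (hσ : ∀ m, σ m ≠ m → mkt.IsNextMan μ m (σ m)) (m : M) :
    mkt.mRank m none ≤ mkt.mRank m ((μ.permute σ).mu m) := by
  change mkt.mRank m none ≤ mkt.mRank m (μ.mu (σ m))
  by_cases hm : σ m = m
  · exact hm.symm ▸ h.mRank_none_le m
  · obtain ⟨w, hw, hmw⟩ := hσ m hm
    exact hmw ▸ hw.1.1.le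

theorem Stable.permute (h : mkt.Stable μ) (hσ : ∀ m, σ m ≠ m → mkt.IsNextMan μ m (σ m)) :
    mkt.Stable (μ.permute σ) := by
  have hdom := dom_permute hσ
  have hmen := h.mRank_none_le_permute hσ
  refine ⟨indivRational_iff.2 ⟨hmen, fun w => (h.wRank_none_le w).trans (hdom w)⟩, ?_⟩
  rintro m w ⟨-, hmw, hwm⟩
  have hwμ : mkt.wRank w (μ.nu w) < mkt.wRank w (some m) := (hdom w).trans_lt hwm
  have hmμ : mkt.mRank m (some w) < mkt.mRank m (μ.mu m) :=
    not_le.1 fun hle => hwμ.not_ge (h.wRank_le_of_mRank_le hle)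
  have hcand : w ∈ mkt.candidates μ m := ⟨(hmen m).trans_lt hmw, hmμ, hwμ⟩
  change mkt.mRank m (μ.mu (σ m)) < mkt.mRank m (some w) at hmw
  by_cases hm : σ m = m
  · rw [hm] at hmw
    exact hmμ.not_gt hmw
  · obtain ⟨v, hv, hmv⟩ := hσ m hm
    exact (hv.2 w hcand).not_gt (hmv ▸ hmw)

end Permute

end Market

theorem cover_is_rotation_elimination_general (mkt : Market M W) (μ0 μ' : Matching M W)
    (h0 : mkt.Stable μ0) (h' : mkt.Stable μ') (hcov : mkt.Covers μ' μ0)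
    (hfin : (Matching.moved μ0 μ').Finite) :
    ∃ ρ : List (W × M), Matching.IsElimOf μ' μ0 ρ := by
  classical
  obtain ⟨⟨hdom, hne⟩, hmin⟩ := hcov
  obtain ⟨l, hl_ne, hl, hnext⟩ := exists_nodup_formPerm_of_finite hfin
    (Matching.nonempty_moved hne) fun m hm => hdom.exists_isNextMan h0 h' hfin hm
  obtain ⟨m₀, hm₀⟩ := List.exists_mem_of_ne_nil l hl_ne
  have hlen : 2 ≤ l.length := (List.formPerm_apply_mem_ne_self_iff l hl m₀ hm₀).1
    (hnext m₀ hm₀).2.ne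
  have hσ := fun m hm => hnext m (List.mem_of_formPerm_apply_ne hm)
  have hσ_next : ∀ m, l.formPerm m ≠ m → mkt.IsNextMan μ0 m (l.formPerm m) :=
    fun m hm => (hσ m hm).2
  have hμ' : μ' = μ0.permute l.formPerm := by
    by_contra hne'
    exact hmin ⟨_, h0.permute hσ_next, ⟨hdom.dom_permute_of_mem_moved h0 h' hσ, hne'⟩,
      Market.dom_permute hσ_next, Market.permute_ne_of_isNextMan (hnext m₀ hm₀).2⟩
  have hmatched : ∀ m ∈ l, ∃ w, μ0.mu m = some w := fun m hm =>
    hdom.exists_mu_eq_some_of_mem_moved h0 h' (hnext m hm).1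
  have : Nonempty W := ⟨(hmatched m₀ hm₀).choose⟩
  choose! t ht using hmatched
  exact ⟨_, hμ' ▸ Matching.isElimOf_permute_formPerm hl hlen ht⟩

/-- if the stable matching `μ'` covers the stable matching `μ0`
in the woman-dominance order, then `μ'` is the elimination of a rotation
exposed in `μ0`: there is a list `[(w_0,m_0),…,(w_{k-1},m_{k-1})]`, `k ≥ 2`,
with distinct women and distinct men, such that `μ0(w_i) = m_i`,
`μ'(m_i) = w_{(i+1) mod k}`, and every agent not in the list has the same
partner in `μ0` and `μ'`. -/
theorem cover_is_rotation_elimination {M W : Type*} [Fintype M] [Fintype W]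
    (mkt : Market M W) (μ0 μ' : Matching M W)
    (h0 : mkt.Stable μ0) (h' : mkt.Stable μ') (hcov : mkt.Covers μ' μ0) :
    ∃ ρ : List (W × M), Matching.IsElimOf μ' μ0 ρ :=
  cover_is_rotation_elimination_general mkt μ0 μ' h0 h' hcov (Set.toFinite _)
end

section
/- In a matching market with n men and n women, the number of rotations is at most n(n-1)/2, i.e., |Π| ≤ n(n-1)/2. -/
variable {M W : Type*}

/-!
Recording a stable matching by the ranks of the women's partners turns the stable matchings into a
sublattice of `W → ℕ`. If `a ⋖ a'` is a cover in a sublattice of a product of chains, then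
`a ⊔ (a' ⊓ b)` is `a` or `a'`, so no `b` can separate the coordinates in which `a` and `a'` differ.
Hence two rotations containing a common pair `(w, m)` move the same agents in the same way, and
agree up to a cyclic shift: the rotations are pairwise disjoint sets of at least two pairs.

By the rural hospitals theorem all these pairs come from the same `k` matched men and `k` matched
women. A rotation moves its men to strictly worse women, so it never pairs a man with the worst of
the matched women. This leaves `k * (k - 1)` pairs.
-/

section PartialInjections

variable {α β : Type*}

theorem encard_setOf_ne_none {g : α → Option β}
    (hg : ∀ a a' b, g a = some b → g a' = some b → a = a') :
    {a | g a ≠ none}.encard = {b | ∃ a, g a = some b}.encard := by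
  have himage : g '' {a | g a ≠ none} = some '' {b | ∃ a, g a = some b} := by
    ext o
    cases o with
    | none => simp
    | some b => simp +contextual [and_iff_right_of_imp]
  have hinj : Set.InjOn g {a | g a ≠ none} := by
    intro a ha a' _ h
    obtain ⟨b, hb⟩ := Option.ne_none_iff_exists'.1 ha
    exact hg a a' b hb (h ▸ hb)
  rw [← hinj.encard_image, himage, (Option.some_injective β).injOn.encard_image]

end PartialInjections

section Covers

variable {ι : Type*} {α : ι → Type*} [∀ i, LinearOrder (α i)] {L : Sublattice (∀ i, α i)}
  {a a' b b' : L}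

theorem forall_le_or_forall_le_of_covBy (h : a ⋖ a') (b : L) :
    (∀ i, a.1 i < a'.1 i → b.1 i ≤ a.1 i) ∨ (∀ i, a.1 i < a'.1 i → a'.1 i ≤ b.1 i) := by
  rcases h.eq_or_eq le_sup_left (sup_le h.le inf_le_left : a ⊔ a' ⊓ b ≤ a') with hc | hc
  · refine .inl fun i hi => ?_
    have hci : a.1 i ⊔ a'.1 i ⊓ b.1 i = a.1 i := congrFun (congrArg Subtype.val hc) i
    simpa [hi.not_ge] using sup_eq_left.1 hci
  · refine .inr fun i hi => ?_
    have hci : a.1 i ⊔ a'.1 i ⊓ b.1 i = a'.1 i := congrFun (congrArg Subtype.val hc) i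
    simpa [hi.not_ge] using hci.ge

theorem apply_eq_of_covBy_of_covBy (ha : a ⋖ a') (hb : b ⋖ b') {i : ι} (hi : a.1 i = b.1 i)
    (hai : a.1 i < a'.1 i) (hbi : b.1 i < b'.1 i) {j : ι} (hj : a.1 j < a'.1 j) :
    b.1 j = a.1 j ∧ b'.1 j = a'.1 j := by
  have hle : ∀ {x x' y y' : L}, x ⋖ x' → x.1 i = y.1 i → x.1 i < x'.1 i → y.1 i < y'.1 i →
      ∀ j, x.1 j < x'.1 j → y.1 j ≤ x.1 j ∧ x'.1 j ≤ y'.1 j := by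
    intro x x' y y' hx hxy hxi hyi j hj
    have hlow := (forall_le_or_forall_le_of_covBy hx y).resolve_right
      fun h => (h i hxi).not_gt (hxy ▸ hxi)
    have hhigh := (forall_le_or_forall_le_of_covBy hx y').resolve_left
      fun h => (h i hxi).not_gt (hxy ▸ hyi)
    exact ⟨hlow j hj, hhigh j hj⟩
  have hab := hle ha hi hai hbi j hj
  have hba := hle hb hi.symm hbi hai j (hab.1.trans_lt (hj.trans_le hab.2))
  exact ⟨hab.1.antisymm hba.1, hba.2.antisymm hab.2⟩

end Covers

section CyclicLists

variable {α : Type*}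

theorem exists_finset_isRotated {P : Set (List α)} {Q : Finset α} {k : ℕ} (hk : 0 < k)
    (hlen : ∀ l ∈ P, k ≤ l.length) (hnodup : ∀ l ∈ P, l.Nodup) (hmem : ∀ l ∈ P, ∀ x ∈ l, x ∈ Q)
    (hrot : ∀ l ∈ P, ∀ l' ∈ P, ∀ x ∈ l, x ∈ l' → l ~r l') :
    ∃ S : Finset (List α), (∀ l ∈ S, l ∈ P) ∧ (∀ l ∈ P, ∃ l' ∈ S, l' ~r l) ∧
      S.card * k ≤ Q.card := by
  classical
  obtain ⟨T, hTP, hT⟩ := Set.exists_subset_bijOn P ((↑) : List α → Cycle α)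
  have hdisj : T.PairwiseDisjoint List.toFinset := by
    intro l hl l' hl' hne
    refine List.disjoint_toFinset_iff_disjoint.2 fun x hx hx' => hne (hT.injOn hl hl' ?_)
    exact Cycle.coe_eq_coe.2 (hrot l (hTP hl) l' (hTP hl') x hx hx')
  have hsub : ∀ l ∈ T, l.toFinset ⊆ Q := fun l hl x hx =>
    hmem l (hTP hl) x (List.mem_toFinset.1 hx)
  have hcard : ∀ l ∈ T, k ≤ l.toFinset.card := fun l hl => by
    rw [List.toFinset_card_of_nodup (hnodup l (hTP hl))]
    exact hlen l (hTP hl)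
  have hfin : T.Finite := by
    refine Set.Finite.of_injOn (f := List.toFinset) (t := Q.powerset)
      (fun l hl => Finset.mem_coe.2 (Finset.mem_powerset.2 (hsub l hl))) ?_ (Finset.finite_toSet _)
    intro l hl l' hl' h
    by_contra hne
    have hempty : l.toFinset = ∅ := by
      have hself : Disjoint l.toFinset l'.toFinset := hdisj hl hl' hne
      rwa [← h, disjoint_self] at hself
    simpa [hempty, hk.ne'] using hcard l hl
  refine ⟨hfin.toFinset, fun l hl => hTP (hfin.mem_toFinset.1 hl), fun l hl => ?_, ?_⟩
  · obtain ⟨l', hl', h⟩ := hT.surjOn ⟨l, hl, rfl⟩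
    exact ⟨l', hfin.mem_toFinset.2 hl', Cycle.coe_eq_coe.1 h⟩
  · calc hfin.toFinset.card * k ≤ ∑ l ∈ hfin.toFinset, l.toFinset.card :=
          Finset.card_nsmul_le_sum _ _ _ fun l hl => hcard l (hfin.mem_toFinset.1 hl)
      _ = (hfin.toFinset.biUnion List.toFinset).card :=
          (Finset.card_biUnion (by simpa using hdisj)).symm
      _ ≤ Q.card := Finset.card_le_card <|
          Finset.biUnion_subset.2 fun l hl => hsub l (hfin.mem_toFinset.1 hl)

end CyclicLists

section Duality

/-- The market with the roles of men and women exchanged, used to derive statements about one side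
from the statements about the other. -/
def Market.swap (mkt : Market M W) : Market W M :=
  ⟨mkt.wRank, mkt.mRank, mkt.wRank_inj, mkt.mRank_inj⟩

/-- A matching, regarded as a matching of the market with the two sides exchanged. -/
def Matching.swap (μ : Matching M W) : Matching W M :=
  ⟨μ.nu, μ.mu, fun w m => (μ.consistent m w).symm⟩

theorem Market.Stable.swap {mkt : Market M W} {μ : Matching M W} (h : mkt.Stable μ) :
    mkt.swap.Stable μ.swap :=
  ⟨⟨h.1.2, h.1.1⟩, fun w m hb =>
    h.2 m w ⟨fun hm => hb.1 ((μ.consistent m w).1 hm), hb.2.2, hb.2.1⟩⟩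

end Duality

section MatchedAgents

variable (μ : Matching M W)

/-- The men who have a partner in `μ`. -/
def Matching.matchedMen : Set M := {m | μ.mu m ≠ none}

/-- The women who have a partner in `μ`. -/
def Matching.matchedWomen : Set W := {w | μ.nu w ≠ none}

theorem Matching.mem_matchedMen_of_nu_eq {μ : Matching M W} {m : M} {w : W}
    (h : μ.nu w = some m) : m ∈ μ.matchedMen := by
  simp [matchedMen, (μ.consistent m w).2 h]

theorem Matching.mem_matchedWomen_of_nu_eq {μ : Matching M W} {m : M} {w : W}
    (h : μ.nu w = some m) : w ∈ μ.matchedWomen := by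
  simp [matchedWomen, h]

theorem Matching.eq_of_nu_eq {m : M} {w w' : W} (h : μ.nu w = some m) (h' : μ.nu w' = some m) :
    w = w' := by
  simpa [(μ.consistent m w).2 h] using (μ.consistent m w').2 h'

theorem Matching.encard_matchedWomen : μ.matchedWomen.encard = μ.matchedMen.encard := by
  have hrange : {m | ∃ w, μ.nu w = some m} = μ.matchedMen := by
    ext m
    simp [matchedMen, Option.ne_none_iff_exists', μ.consistent]
  rw [matchedWomen, encard_setOf_ne_none fun _ _ _ => μ.eq_of_nu_eq, hrange]

theorem Matching.finite_matchedWomen {μ : Matching M W} (h : μ.matchedMen.Finite) :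
    μ.matchedWomen.Finite :=
  h.finite_of_encard_le μ.encard_matchedWomen.le

variable {μ}

theorem Matching.eq_some_iff_of_matched_subset (hfin : μ.matchedMen.Finite) {f : M → Option W}
    {g : W → Option M} (hgf : ∀ m w, g w = some m → f m = some w)
    (hf : {m | f m ≠ none} ⊆ μ.matchedMen) (hg : μ.matchedWomen ⊆ {w | g w ≠ none}) (m : M)
    (w : W) : f m = some w ↔ g w = some m := by
  refine ⟨fun hm => ?_, hgf m w⟩
  have hinj : ∀ w w' m, g w = some m → g w' = some m → w = w' := by
    intro w w' m h h'
    simpa [hgf m w h] using hgf m w' h'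
  have hsub : {m | ∃ w, g w = some m} ⊆ μ.matchedMen := by
    rintro m ⟨w, hw⟩
    exact hf (by simp [hgf m w hw])
  -- `g` matches at least as many women as `μ`, so no man matched by `μ` is left out.
  have hrange : {m | ∃ w, g w = some m} = μ.matchedMen := by
    refine (hfin.subset hsub).eq_of_subset_of_encard_le hsub ?_
    rw [← encard_setOf_ne_none hinj, ← μ.encard_matchedWomen]
    exact Set.encard_le_encard hg
  obtain ⟨w', hw'⟩ : m ∈ {m | ∃ w, g w = some m} := hrange ▸ hf (by simp [hm])
  have hww' : w = w' := by simpa [hm] using hgf m w' hw'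
  rwa [hww']

end MatchedAgents

section Ranks

variable (mkt : Market M W)

/-- The rank of each woman's partner; it determines the matching, and woman-dominance is the
pointwise order of these functions. -/
def Market.womenRank (μ : Matching M W) (w : W) : ℕ := mkt.wRank w (μ.nu w)

/-- The rank of each man's partner. -/
def Market.menRank (μ : Matching M W) (m : M) : ℕ := mkt.mRank m (μ.mu m)

variable {mkt} {μ ν : Matching M W}

theorem Market.womenRank_apply_eq_iff {w : W} :
    mkt.womenRank μ w = mkt.womenRank ν w ↔ μ.nu w = ν.nu w :=
  (mkt.wRank_inj w).eq_iff

theorem Matching.ext_nu (h : μ.nu = ν.nu) : μ = ν := by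
  have hmu : μ.mu = ν.mu := by
    funext m
    ext w
    rw [μ.consistent, ν.consistent, h]
  cases μ
  cases ν
  congr

theorem Market.womenRank_injective : Function.Injective mkt.womenRank := fun _ _ h =>
  Matching.ext_nu (funext fun w => womenRank_apply_eq_iff.1 (congrFun h w))

theorem Market.strictDom_iff : mkt.StrictDom μ ν ↔ mkt.womenRank ν < mkt.womenRank μ := by
  rw [lt_iff_le_and_ne, ← womenRank_injective.ne_iff.symm, ne_comm]
  rfl

theorem Market.Stable.mem_matchedMen_iff (h : mkt.Stable μ) {m : M} :
    m ∈ μ.matchedMen ↔ mkt.mRank m none < mkt.menRank μ m := by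
  change μ.mu m ≠ none ↔ mkt.mRank m none < mkt.mRank m (μ.mu m)
  cases hm : μ.mu m with
  | none => simp
  | some w => simpa using h.1.1 m w hm

theorem Market.Stable.mem_matchedWomen_iff (h : mkt.Stable μ) {w : W} :
    w ∈ μ.matchedWomen ↔ mkt.wRank w none < mkt.womenRank μ w :=
  h.swap.mem_matchedMen_iff

theorem Market.Stable.none_le_menRank (h : mkt.Stable μ) (m : M) :
    mkt.mRank m none ≤ mkt.menRank μ m := by
  by_cases hm : m ∈ μ.matchedMen
  · exact (h.mem_matchedMen_iff.1 hm).le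
  · rw [menRank, not_not.1 hm]

theorem Market.Stable.womenRank_lt_of_menRank_lt (h : mkt.Stable μ) {m : M} {w : W}
    (hm : mkt.menRank μ m < mkt.mRank m (some w)) :
    mkt.wRank w (some m) < mkt.womenRank μ w := by
  have hmw : μ.mu m ≠ some w := fun hmw => by simp [menRank, hmw] at hm
  refine lt_of_le_of_ne (not_lt.1 fun hw => h.2 m w ⟨hmw, hm, hw⟩) fun hw => hmw ?_
  exact (μ.consistent m w).2 (mkt.wRank_inj w hw).symm

theorem Market.Stable.menRank_le_of_womenRank_le (hν : mkt.Stable ν) {m : M} {w : W}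
    (hw : μ.nu w = some m) (hle : mkt.womenRank ν w ≤ mkt.womenRank μ w) :
    mkt.menRank μ m ≤ mkt.menRank ν m := by
  rw [womenRank.eq_def mkt μ, hw] at hle
  rw [menRank.eq_def mkt μ, (μ.consistent m w).2 hw]
  exact not_lt.1 fun hm => (hν.womenRank_lt_of_menRank_lt hm).not_ge hle

end Ranks

section Lattice

variable (mkt : Market M W) (μ ν : Matching M W)

/-- The more preferred of each woman's partners in `μ` and `ν`. -/
def Market.joinNu (w : W) : Option M :=
  if mkt.womenRank ν w ≤ mkt.womenRank μ w then μ.nu w else ν.nu w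

/-- The less preferred of each man's partners in `μ` and `ν`. -/
def Market.meetMu (m : M) : Option W :=
  if mkt.menRank μ m ≤ mkt.menRank ν m then μ.mu m else ν.mu m

theorem Market.wRank_joinNu (w : W) :
    mkt.wRank w (mkt.joinNu μ ν w) = mkt.womenRank μ w ⊔ mkt.womenRank ν w := by
  rw [joinNu, apply_ite (mkt.wRank w), sup_comm]
  exact (max_def _ _).symm

theorem Market.mRank_meetMu (m : M) :
    mkt.mRank m (mkt.meetMu μ ν m) = mkt.menRank μ m ⊓ mkt.menRank ν m := by
  rw [meetMu, apply_ite (mkt.mRank m)]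
  exact (min_def _ _).symm

variable {mkt μ ν}

theorem Market.meetMu_eq_of_joinNu_eq (hμ : mkt.Stable μ) (hν : mkt.Stable ν) {m : M} {w : W}
    (h : mkt.joinNu μ ν w = some m) : mkt.meetMu μ ν m = some w := by
  apply mkt.mRank_inj m
  rw [mRank_meetMu]
  unfold joinNu at h
  split_ifs at h with hle
  · rw [inf_eq_left.2 (hν.menRank_le_of_womenRank_le h hle), menRank, (μ.consistent m w).2 h]
  · rw [inf_eq_right.2 (hμ.menRank_le_of_womenRank_le h (le_of_not_ge hle)), menRank,
      (ν.consistent m w).2 h]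

theorem Market.meetMu_eq_some_iff (hμ : mkt.Stable μ) (hν : mkt.Stable ν)
    (hfin : μ.matchedMen.Finite) (m : M) (w : W) :
    mkt.meetMu μ ν m = some w ↔ mkt.joinNu μ ν w = some m := by
  refine Matching.eq_some_iff_of_matched_subset hfin
    (fun _ _ => meetMu_eq_of_joinNu_eq hμ hν) (fun m hm hnone => hm ?_) (fun w hw hnone => ?_) m w
  · apply mkt.mRank_inj m
    rw [mRank_meetMu, menRank, hnone, inf_eq_left.2 (hν.none_le_menRank m)]
  · have hle : mkt.womenRank μ w ≤ mkt.wRank w none := by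
      rw [← hnone, wRank_joinNu]
      exact le_sup_left
    exact (hμ.mem_matchedWomen_iff.1 hw).not_ge hle

theorem Market.Stable.exists_sup (hμ : mkt.Stable μ) (hν : mkt.Stable ν)
    (hfin : μ.matchedMen.Finite) :
    ∃ σ, mkt.Stable σ ∧ mkt.womenRank σ = mkt.womenRank μ ⊔ mkt.womenRank ν ∧
      mkt.menRank σ = mkt.menRank μ ⊓ mkt.menRank ν := by
  let σ : Matching M W := ⟨_, _, meetMu_eq_some_iff hμ hν hfin⟩
  have hwomen : mkt.womenRank σ = mkt.womenRank μ ⊔ mkt.womenRank ν :=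
    funext (mkt.wRank_joinNu μ ν)
  have hmen : mkt.menRank σ = mkt.menRank μ ⊓ mkt.menRank ν := funext (mkt.mRank_meetMu μ ν)
  refine ⟨σ, ⟨⟨fun m w h => ?_, fun w m h => ?_⟩, fun m w h => ?_⟩, hwomen, hmen⟩
  · change mkt.meetMu μ ν m = some w at h
    unfold meetMu at h
    split_ifs at h
    exacts [hμ.1.1 m w h, hν.1.1 m w h]
  · change mkt.joinNu μ ν w = some m at h
    unfold joinNu at h
    split_ifs at h
    exacts [hμ.1.2 w m h, hν.1.2 w m h]
  · obtain ⟨-, hm, hw⟩ := h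
    change mkt.menRank σ m < _ at hm
    change mkt.womenRank σ w < _ at hw
    rw [hmen, Pi.inf_apply, inf_lt_iff] at hm
    rw [hwomen, Pi.sup_apply, sup_lt_iff] at hw
    rcases hm with hm | hm
    · exact (hμ.womenRank_lt_of_menRank_lt hm).not_gt hw.1
    · exact (hν.womenRank_lt_of_menRank_lt hm).not_gt hw.2

theorem Market.Stable.exists_inf (hμ : mkt.Stable μ) (hν : mkt.Stable ν)
    (hfin : μ.matchedMen.Finite) :
    ∃ σ, mkt.Stable σ ∧ mkt.womenRank σ = mkt.womenRank μ ⊓ mkt.womenRank ν := by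
  obtain ⟨σ, hσ, -, hmen⟩ := hμ.swap.exists_sup hν.swap (Matching.finite_matchedWomen hfin)
  exact ⟨σ.swap, hσ.swap, hmen⟩

/-- The lattice of stable matchings, each recorded by the ranks of the women's partners. -/
def Market.stableRanks (mkt : Market M W) (hfin : ∀ μ, mkt.Stable μ → μ.matchedMen.Finite) :
    Sublattice (W → ℕ) where
  carrier := mkt.womenRank '' {μ | mkt.Stable μ}
  supClosed' := by
    rintro _ ⟨μ, hμ, rfl⟩ _ ⟨ν, hν, rfl⟩
    obtain ⟨σ, hσ, h, -⟩ := hμ.exists_sup hν (hfin μ hμ)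
    exact ⟨σ, hσ, h⟩
  infClosed' := by
    rintro _ ⟨μ, hμ, rfl⟩ _ ⟨ν, hν, rfl⟩
    exact hμ.exists_inf hν (hfin μ hμ)

theorem Market.Covers.covBy {hfin : ∀ μ, mkt.Stable μ → μ.matchedMen.Finite}
    (h : mkt.Covers ν μ) (hμ : mkt.Stable μ) (hν : mkt.Stable ν) :
    (⟨mkt.womenRank μ, μ, hμ, rfl⟩ : mkt.stableRanks hfin) ⋖ ⟨mkt.womenRank ν, ν, hν, rfl⟩ := by
  refine ⟨strictDom_iff.1 h.1, ?_⟩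
  rintro ⟨_, σ, hσ, rfl⟩ hμσ hσν
  exact h.2 ⟨σ, hσ, strictDom_iff.2 hσν, strictDom_iff.2 hμσ⟩

end Lattice

section RuralHospitals

variable {mkt : Market M W} {μ ν : Matching M W}

theorem Market.Stable.matchedMen_subset (hμ : mkt.Stable μ) (hν : mkt.Stable ν)
    (hfin : μ.matchedMen.Finite) : μ.matchedMen ⊆ ν.matchedMen := by
  obtain ⟨σ, hσ, hwomen, hmen⟩ := hμ.exists_sup hν hfin
  have hrank : ∀ m ∈ σ.matchedMen,
      mkt.mRank m none < mkt.menRank μ m ∧ mkt.mRank m none < mkt.menRank ν m := by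
    intro m hm
    rwa [hσ.mem_matchedMen_iff, hmen, Pi.inf_apply, lt_inf_iff] at hm
  have hsub : σ.matchedMen ⊆ μ.matchedMen := fun m hm =>
    hμ.mem_matchedMen_iff.2 (hrank m hm).1
  have hsub' : μ.matchedWomen ⊆ σ.matchedWomen := by
    intro w hw
    rw [hσ.mem_matchedWomen_iff, hwomen]
    exact (hμ.mem_matchedWomen_iff.1 hw).trans_le le_sup_left
  have heq : σ.matchedMen = μ.matchedMen := by
    refine (hfin.subset hsub).eq_of_subset_of_encard_le hsub ?_
    rw [← σ.encard_matchedWomen, ← μ.encard_matchedWomen]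
    exact Set.encard_le_encard hsub'
  rw [← heq]
  exact fun m hm => hν.mem_matchedMen_iff.2 (hrank m hm).2

theorem Market.Stable.matchedWomen_subset (hμ : mkt.Stable μ) (hν : mkt.Stable ν)
    (hfin : μ.matchedMen.Finite) : μ.matchedWomen ⊆ ν.matchedWomen :=
  hμ.swap.matchedMen_subset hν.swap (Matching.finite_matchedWomen hfin)

end RuralHospitals

section Rotations

variable {mkt : Market M W} {μ μ' ν ν' : Matching M W} {ρ σ : List (W × M)} {p : W × M}

namespace Matching.IsElimOf

theorem nodup (h : μ'.IsElimOf μ ρ) : ρ.Nodup := h.2.1.of_map _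

theorem nu_eq (h : μ'.IsElimOf μ ρ) (hp : p ∈ ρ) : μ.nu p.1 = some p.2 := by
  obtain ⟨i, rfl⟩ := List.mem_iff_get.1 hp
  exact h.2.2.2.1 i

theorem nu_formPerm [DecidableEq M] [DecidableEq W] (h : μ'.IsElimOf μ ρ) (hp : p ∈ ρ) :
    μ'.nu (ρ.formPerm p).1 = some p.2 := by
  obtain ⟨i, hi, rfl⟩ := List.getElem_of_mem hp
  rw [List.formPerm_apply_getElem _ h.nodup, ← μ'.consistent]
  exact h.2.2.2.2.1 ⟨i, hi⟩

theorem fst_formPerm_ne [DecidableEq M] [DecidableEq W] (h : μ'.IsElimOf μ ρ) (hp : p ∈ ρ) :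
    (ρ.formPerm p).1 ≠ p.1 := by
  refine fun heq => (List.formPerm_apply_mem_ne_self_iff _ h.nodup p hp).2 h.1 ?_
  refine Prod.ext heq (Option.some_injective _ ?_)
  rw [← h.nu_eq hp, ← heq, h.nu_eq (List.formPerm_apply_mem_of_mem hp)]

theorem nu_ne (h : μ'.IsElimOf μ ρ) (hp : p ∈ ρ) : μ'.nu p.1 ≠ μ.nu p.1 := by
  classical
  intro heq
  exact h.fst_formPerm_ne hp (μ'.eq_of_nu_eq (h.nu_formPerm hp) (heq.trans (h.nu_eq hp)))

theorem mem_iff (h : μ'.IsElimOf μ ρ) :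
    p ∈ ρ ↔ μ.nu p.1 = some p.2 ∧ μ'.nu p.1 ≠ μ.nu p.1 := by
  refine ⟨fun hp => ⟨h.nu_eq hp, h.nu_ne hp⟩, fun ⟨hp, hne⟩ => ?_⟩
  have hfst : p.1 ∈ ρ.map Prod.fst := not_imp_comm.1 (h.2.2.2.2.2.2 p.1) hne
  obtain ⟨q, hq, hqp⟩ := List.mem_map.1 hfst
  have hpq : p = q := Prod.ext hqp.symm <| Option.some_injective _ <| by
    rw [← hp, ← hqp, h.nu_eq hq]
  exact hpq ▸ hq

theorem subset (hρ : μ'.IsElimOf μ ρ) (hσ : ν'.IsElimOf ν σ)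
    (hμν : ∀ w, μ'.nu w ≠ μ.nu w → ν.nu w = μ.nu w ∧ ν'.nu w = μ'.nu w) : ρ ⊆ σ := by
  intro p hp
  obtain ⟨hν, hν'⟩ := hμν p.1 (hρ.nu_ne hp)
  rw [hσ.mem_iff, hν, hν']
  exact hρ.mem_iff.1 hp

theorem isRotated (hρ : μ'.IsElimOf μ ρ) (hσ : ν'.IsElimOf ν σ)
    (hμν : ∀ w, μ'.nu w ≠ μ.nu w → ν.nu w = μ.nu w ∧ ν'.nu w = μ'.nu w)
    (hνμ : ∀ w, ν'.nu w ≠ ν.nu w → μ.nu w = ν.nu w ∧ μ'.nu w = ν'.nu w) : ρ ~r σ := by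
  classical
  have hmem : ∀ p, p ∈ ρ ↔ p ∈ σ := fun p => ⟨fun hp => hρ.subset hσ hμν hp,
    fun hp => hσ.subset hρ hνμ hp⟩
  suffices hperm : ρ.formPerm = σ.formPerm from
    ((List.formPerm_eq_formPerm_iff hρ.nodup hσ.nodup).1 hperm).resolve_right fun h => by
      have := hρ.1
      omega
  ext1 p
  by_cases hp : p ∈ ρ
  · have hpσ := (hmem p).1 hp
    have hq := List.formPerm_apply_mem_of_mem hp
    have hr := List.formPerm_apply_mem_of_mem hpσ
    obtain ⟨hν, hν'⟩ := hμν _ (hρ.nu_ne hq)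
    have hfst : (ρ.formPerm p).1 = (σ.formPerm p).1 :=
      ν'.eq_of_nu_eq (hν'.trans (hρ.nu_formPerm hp)) (hσ.nu_formPerm hpσ)
    refine Prod.ext hfst (Option.some_injective _ ?_)
    rw [← hρ.nu_eq hq, ← hσ.nu_eq hr, ← hν, hfst]
  · rw [List.formPerm_apply_of_notMem hp, List.formPerm_apply_of_notMem (mt (hmem p).2 hp)]

end Matching.IsElimOf

theorem Market.Covers.nu_eq_of_covers (hfin : ∀ μ, mkt.Stable μ → μ.matchedMen.Finite)
    (hc : mkt.Covers μ' μ) (hμ : mkt.Stable μ) (hμ' : mkt.Stable μ') (hd : mkt.Covers ν' ν)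
    (hν : mkt.Stable ν) (hν' : mkt.Stable ν') {w : W} (hw : μ.nu w = ν.nu w)
    (hμw : μ'.nu w ≠ μ.nu w) (hνw : ν'.nu w ≠ ν.nu w) (v : W) (hv : μ'.nu v ≠ μ.nu v) :
    ν.nu v = μ.nu v ∧ ν'.nu v = μ'.nu v := by
  have hlt : ∀ {κ κ' : Matching M W}, mkt.Covers κ' κ → ∀ u, κ'.nu u ≠ κ.nu u →
      mkt.womenRank κ u < mkt.womenRank κ' u := fun h u hu =>
    lt_of_le_of_ne (h.1.1 u) fun heq => hu (womenRank_apply_eq_iff.1 heq).symm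
  have hranks := apply_eq_of_covBy_of_covBy (hc.covBy (hfin := hfin) hμ hμ') (hd.covBy hν hν')
    (womenRank_apply_eq_iff.2 hw) (hlt hc w hμw) (hlt hd w hνw) (hlt hc v hv)
  exact ⟨womenRank_apply_eq_iff.1 hranks.1, womenRank_apply_eq_iff.1 hranks.2⟩

theorem Market.InPi.isRotated (hfin : ∀ μ, mkt.Stable μ → μ.matchedMen.Finite)
    (hρ : mkt.InPi ρ) (hσ : mkt.InPi σ) (hpρ : p ∈ ρ) (hpσ : p ∈ σ) : ρ ~r σ := by
  obtain ⟨μ, hμ, μ', eρ, hμ', hc⟩ := hρ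
  obtain ⟨ν, hν, ν', eσ, hν', hd⟩ := hσ
  have hp : μ.nu p.1 = ν.nu p.1 := (eρ.nu_eq hpρ).trans (eσ.nu_eq hpσ).symm
  have hμp := eρ.nu_ne hpρ
  have hνp := eσ.nu_ne hpσ
  exact eρ.isRotated eσ (hc.nu_eq_of_covers hfin hμ hμ' hd hν hν' hp hμp hνp)
    (hd.nu_eq_of_covers hfin hν hν' hc hμ hμ' hp.symm hνp hμp)

theorem Market.InPi.exists_mem_mRank_lt (hρ : mkt.InPi ρ) (hp : p ∈ ρ) :
    ∃ q ∈ ρ, mkt.mRank p.2 (some q.1) < mkt.mRank p.2 (some p.1) := by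
  classical
  obtain ⟨μ, hμ, μ', eρ, -, hc⟩ := hρ
  refine ⟨ρ.formPerm p, List.formPerm_apply_mem_of_mem hp, lt_of_le_of_ne ?_ fun heq => ?_⟩
  · have hle := hμ.menRank_le_of_womenRank_le (eρ.nu_formPerm hp) (hc.1.1 _)
    rwa [menRank, menRank, (μ'.consistent _ _).2 (eρ.nu_formPerm hp),
      (μ.consistent _ _).2 (eρ.nu_eq hp)] at hle
  · exact eρ.fst_formPerm_ne hp (Option.some_injective _ (mkt.mRank_inj _ heq))

theorem Market.InPi.mem_matched (hfin : ∀ μ, mkt.Stable μ → μ.matchedMen.Finite)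
    (hμ : mkt.Stable μ) (hρ : mkt.InPi ρ) (hp : p ∈ ρ) :
    p.1 ∈ μ.matchedWomen ∧ p.2 ∈ μ.matchedMen := by
  obtain ⟨ν, hν, ν', eρ, -, -⟩ := hρ
  have hpν := eρ.nu_eq hp
  exact ⟨hν.matchedWomen_subset hμ (hfin ν hν) (Matching.mem_matchedWomen_of_nu_eq hpν),
    hν.matchedMen_subset hμ (hfin ν hν) (Matching.mem_matchedMen_of_nu_eq hpν)⟩

theorem Market.Stable.exists_matchedWoman_forall_notMem
    (hfin : ∀ μ, mkt.Stable μ → μ.matchedMen.Finite) (hμ : mkt.Stable μ)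
    (hne : μ.matchedWomen.Nonempty) (m : M) :
    ∃ w ∈ μ.matchedWomen, ∀ ρ, mkt.InPi ρ → (w, m) ∉ ρ := by
  obtain ⟨w, hw, hmin⟩ := Set.exists_min_image μ.matchedWomen (fun w => mkt.mRank m (some w))
    (Matching.finite_matchedWomen (hfin μ hμ)) hne
  refine ⟨w, hw, fun ρ hρ hwm => ?_⟩
  obtain ⟨q, hq, hlt⟩ := hρ.exists_mem_mRank_lt hwm
  exact hlt.not_ge (hmin q.1 (hρ.mem_matched hfin hμ hq).1)

theorem Market.exists_finset_rotation_pairs {n : ℕ}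
    (hn : ∀ μ, mkt.Stable μ → μ.matchedMen.encard ≤ n) :
    ∃ Q : Finset (W × M), (∀ ρ, mkt.InPi ρ → ∀ p ∈ ρ, p ∈ Q) ∧ Q.card ≤ n * (n - 1) := by
  classical
  have hfin : ∀ μ, mkt.Stable μ → μ.matchedMen.Finite := fun μ hμ =>
    Set.finite_of_encard_le_coe (hn μ hμ)
  by_cases hempty : ∀ ρ, mkt.InPi ρ → ∀ p, p ∉ ρ
  · exact ⟨∅, fun ρ hρ p hp => absurd hp (hempty ρ hρ p), Nat.zero_le _⟩
  push Not at hempty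
  obtain ⟨ρ₀, hρ₀, p₀, hp₀⟩ := hempty
  obtain ⟨μ, hμ, -⟩ := id hρ₀
  have hne : μ.matchedWomen.Nonempty := ⟨p₀.1, (hρ₀.mem_matched hfin hμ hp₀).1⟩
  choose worst hworst hnotMem using hμ.exists_matchedWoman_forall_notMem hfin hne
  obtain ⟨A, hA⟩ := (hfin μ hμ).exists_finset_coe
  obtain ⟨B, hB⟩ := (Matching.finite_matchedWomen (hfin μ hμ)).exists_finset_coe
  have hAn : A.card ≤ n := by
    have := hn μ hμ
    rwa [← hA, Set.encard_coe_eq_coe_finsetCard, Nat.cast_le] at this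
  have hBA : B.card = A.card := by
    have := μ.encard_matchedWomen
    rwa [← hA, ← hB, Set.encard_coe_eq_coe_finsetCard, Set.encard_coe_eq_coe_finsetCard,
      Nat.cast_inj] at this
  refine ⟨A.biUnion fun m => B.erase (worst m) ×ˢ {m}, fun ρ hρ p hp => ?_, ?_⟩
  · have hmatched := hρ.mem_matched hfin hμ hp
    rw [← hA, ← hB, Finset.mem_coe, Finset.mem_coe] at hmatched
    have hpworst : p.1 ≠ worst p.2 := fun h => hnotMem p.2 ρ hρ (h ▸ hp)
    exact Finset.mem_biUnion.2 ⟨p.2, hmatched.2, Finset.mem_product.2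
      ⟨Finset.mem_erase.2 ⟨hpworst, hmatched.1⟩, Finset.mem_singleton_self _⟩⟩
  · refine (Finset.card_biUnion_le_card_mul A _ (n - 1) fun m _ => ?_).trans
      (Nat.mul_le_mul_right _ hAn)
    have hmB : worst m ∈ B := Finset.mem_coe.1 (hB ▸ hworst m)
    rw [Finset.card_product, Finset.card_singleton, mul_one, Finset.card_erase_of_mem hmB, hBA]
    exact Nat.sub_le_sub_right hAn 1

end Rotations

theorem card_rotations_le_general (mkt : Market M W) (n : ℕ)
    (hn : ∀ μ, mkt.Stable μ → μ.matchedMen.encard ≤ n) :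
    ∃ S : Finset (List (W × M)),
      (∀ ρ ∈ S, mkt.InPi ρ) ∧
      (∀ ρ : List (W × M), mkt.InPi ρ → ∃ ρ' ∈ S, ρ'.IsRotated ρ) ∧
      S.card ≤ n * (n - 1) / 2 := by
  have hfin : ∀ μ, mkt.Stable μ → μ.matchedMen.Finite := fun μ hμ =>
    Set.finite_of_encard_le_coe (hn μ hμ)
  obtain ⟨Q, hmem, hQ⟩ := mkt.exists_finset_rotation_pairs hn
  obtain ⟨S, hS, hrep, hcard⟩ := exists_finset_isRotated (P := {ρ | mkt.InPi ρ}) two_pos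
    (fun ρ ⟨_, _, _, h, _⟩ => h.1) (fun ρ ⟨_, _, _, h, _⟩ => h.nodup) hmem
    fun ρ hρ σ hσ p => hρ.isRotated hfin hσ
  exact ⟨S, hS, hrep, (Nat.le_div_iff_mul_le two_pos).2 (hcard.trans hQ)⟩

/-- in a market with `n` men and `n` women there are at most
`n(n-1)/2` rotations: some set of at most `n(n-1)/2` rotations contains a
representative of every rotation in `Π` up to cyclic shift. -/
theorem card_rotations_le {M W : Type*} [Fintype M] [Fintype W]
    (mkt : Market M W) (n : ℕ) (hM : Fintype.card M = n) (hW : Fintype.card W = n) :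
    ∃ S : Finset (List (W × M)),
      (∀ ρ ∈ S, mkt.InPi ρ) ∧
      (∀ ρ : List (W × M), mkt.InPi ρ → ∃ ρ' ∈ S, ρ'.IsRotated ρ) ∧
      S.card ≤ n * (n - 1) / 2 := by
  refine card_rotations_le_general mkt n fun μ _ => ?_
  simpa [hM] using Set.encard_le_encard μ.matchedMen.subset_univ
end
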